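/- There exists an absolute constant C > 0 with the following property. Let ε ∈ (0,1], and let S and T be valid configurations of n ≥ 1 points each in ℝ² such that any two distinct points of S, and any two distinct points of T, are at distance at least 2 + ε; let r_S, r_T ≥ 0 be such that S ⊆ closedBall(0, r_S) and T ⊆ closedBall(0, r_T). Then for every unit vector δ ∈ ℝ² there exists c with 0 < c ≤ C·(r_S + r_T + 2)/√ε such that the unlabeled reconfiguration problem from S to T + c • δ is feasible. -/

import Mathlib

open Metric

abbrev Pt : Type := EuclideanSpace ℝ (Fin 2)

/-- The ordered sequence of matched pairs `(s i, t i)` is a valid itinerary for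
translation `v`: the unit disc moved at step `i` from `s i` to `t i + v` never
overlaps the interior of a still-unmoved disc or an already-placed disc. -/
def ValidItinerary {n : ℕ} (s t : Fin n → Pt) (v : Pt) : Prop :=
  ∀ i : Fin n, ∀ x ∈ segment ℝ (s i) (t i + v),
    (∀ j : Fin n, i < j → 2 ≤ dist x (s j)) ∧
    (∀ j : Fin n, j < i → 2 ≤ dist x (t j + v))

/-- The unlabeled reconfiguration problem from `S` to `T'` is feasible: there are
enumerations of `S` and `T'` forming a valid itinerary for translation `0`. -/
def Feasible (n : ℕ) (S T' : Set Pt) : Prop :=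
  ∃ s t : Fin n → Pt,
    Function.Injective s ∧ Function.Injective t ∧
    Set.range s = S ∧ Set.range t = T' ∧
    ValidItinerary s t 0

/-- Sort a finite set by a real-valued function, in decreasing order. -/
theorem exists_enum (n : ℕ) (S : Finset Pt) (hS : S.card = n) (f : Pt → ℝ) :
    ∃ s : Fin n → Pt, Function.Injective s ∧ Set.range s = (S : Set Pt) ∧
      ∀ i j, i ≤ j → f (s j) ≤ f (s i) := by
  let e : Fin n ≃ S := (S.equivFinOfCardEq hS).symm
  let g : Fin n → ℝ := fun i => - f (e i)
  refine ⟨fun i => (e (Tuple.sort g i) : Pt), ?_, ?_, ?_⟩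
  · intro a b h
    exact (Tuple.sort g).injective (e.injective (Subtype.ext h))
  · ext x
    simp only [Set.mem_range, Finset.mem_coe]
    constructor
    · rintro ⟨i, rfl⟩
      exact (e _).2
    · intro hx
      exact ⟨(Tuple.sort g).symm (e.symm ⟨x, hx⟩), by simp⟩
  · intro i j hij
    have h := Tuple.monotone_sort g hij
    simp only [Function.comp, g] at h
    linarith

/-- The moving disc avoids every disc lying behind its starting point. -/
theorem avoid (ε R c : ℝ) (hε : 0 < ε) (hε1 : ε ≤ 1) (hR : 0 ≤ R)
    (hc : 3 * (R + 2) / Real.sqrt ε ≤ c) (δ : Pt) (hδ : ‖δ‖ = 1)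
    (p q e : Pt) (he : ‖e‖ ≤ R) (hpq : 2 + ε ≤ dist p q)
    (hin : inner ℝ (q - p) δ ≤ 0) (x : Pt) (hx : x ∈ segment ℝ p (p + (c • δ + e))) :
    2 ≤ dist x q := by
  rw [segment_eq_image'] at hx
  obtain ⟨l, ⟨hl0, hl1⟩, rfl⟩ := hx
  have hs : 0 < Real.sqrt ε := Real.sqrt_pos.2 hε
  have hs2 : Real.sqrt ε ^ 2 = ε := Real.sq_sqrt hε.le
  have hs1 : Real.sqrt ε ≤ 1 := by nlinarith
  rw [div_le_iff₀ hs] at hc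
  set r := Real.sqrt ε
  have hcpos : 0 < c := by
    by_contra h
    push Not at h
    nlinarith
  set w := c • δ + e with hw
  set d := q - p with hd
  have hdn : 2 + ε ≤ ‖d‖ := by rwa [dist_comm, dist_eq_norm] at hpq
  have hm : 2 * R + 6 ≤ (c - R) * r := by nlinarith
  have hmpos : 0 < c - R := by
    by_contra h
    push Not at h
    nlinarith
  have hwn : c - R ≤ ‖w‖ := by
    have h1 : ‖c • δ‖ ≤ ‖w‖ + ‖e‖ := by
      have := norm_sub_le w e
      rwa [hw, add_sub_cancel_right] at this
    rw [norm_smul, hδ, Real.norm_eq_abs, abs_of_pos hcpos] at h1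
    linarith
  have hdw : inner ℝ d w ≤ ‖d‖ * R := by
    have h1 : inner ℝ d w = c * inner ℝ d δ + inner ℝ d e := by
      rw [hw, inner_add_right, inner_smul_right]
    have h2 := real_inner_le_norm d e
    have h3 : ‖d‖ * ‖e‖ ≤ ‖d‖ * R := by gcongr
    nlinarith
  have hdist : dist (p + l • (p + w - p)) q = ‖d - l • w‖ := by
    rw [dist_comm, dist_eq_norm]
    congr 1
    rw [hd]
    simp only [add_sub_cancel_left]
    abel
  show 2 ≤ dist (p + l • (p + w - p)) q
  rw [hdist]
  have hsq : ‖d - l • w‖ ^ 2 = ‖d‖ ^ 2 - 2 * (l * inner ℝ d w) + l ^ 2 * ‖w‖ ^ 2 := by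
    rw [norm_sub_sq_real, inner_smul_right, norm_smul, mul_pow, Real.norm_eq_abs, sq_abs]
  set D := ‖d‖
  set m := c - R
  have h1 : D ^ 2 - 2 * (l * (D * R)) + l ^ 2 * m ^ 2 ≤ ‖d - l • w‖ ^ 2 := by
    rw [hsq]
    have := mul_le_mul_of_nonneg_left hdw hl0
    have hmw : m ^ 2 ≤ ‖w‖ ^ 2 := by gcongr
    have := mul_le_mul_of_nonneg_left hmw (sq_nonneg l)
    linarith
  have h4 : 4 * R ^ 2 ≤ ε * m ^ 2 := by
    have : (2 * R) ^ 2 ≤ (m * r) ^ 2 :=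
      pow_le_pow_left₀ (by positivity) (by linarith) 2
    rw [mul_pow, mul_pow, hs2] at this
    linarith
  have h5 : m ^ 2 * (D ^ 2 * (1 - ε / 4)) ≤
      m ^ 2 * (D ^ 2 - 2 * (l * (D * R)) + l ^ 2 * m ^ 2) := by
    nlinarith [sq_nonneg (l * m ^ 2 - D * R), mul_le_mul_of_nonneg_left h4 (sq_nonneg D)]
  have h6 := le_of_mul_le_mul_left h5 (by positivity)
  have h7 : (2 + ε) ^ 2 * (1 - ε / 4) ≤ D ^ 2 * (1 - ε / 4) := by
    have : 0 ≤ 1 - ε / 4 := by linarith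
    gcongr
  have h8 : 4 ≤ (2 + ε) ^ 2 * (1 - ε / 4) := by
    nlinarith [mul_pos hε hε, mul_nonneg hε.le (sub_nonneg.2 hε1), mul_nonneg (mul_pos hε hε).le (sub_nonneg.2 hε1)]
  have h9 : (2:ℝ) ^ 2 ≤ ‖d - l • w‖ ^ 2 := by linarith
  exact (sq_le_sq₀ (by norm_num) (norm_nonneg _)).1 h9

/-- There is an absolute constant `C > 0` such that for `(2+ε)`-separated valid
configurations `S`, `T` of `n ≥ 1` points contained in balls of radii `rS`, `rT`,
every unit direction `δ` admits a valid translation `c • δ` with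
`0 < c ≤ C·(rS + rT + 2)/√ε`. -/
theorem stmt2 :
    ∃ C : ℝ, 0 < C ∧
      ∀ ε : ℝ, 0 < ε → ε ≤ 1 →
      ∀ n : ℕ, 1 ≤ n →
      ∀ S T : Finset Pt, ∀ rS rT : ℝ, 0 ≤ rS → 0 ≤ rT →
      S.card = n → T.card = n →
      (∀ p ∈ S, ∀ q ∈ S, p ≠ q → 2 + ε ≤ dist p q) →
      (∀ p ∈ T, ∀ q ∈ T, p ≠ q → 2 + ε ≤ dist p q) →
      (S : Set Pt) ⊆ closedBall 0 rS →
      (T : Set Pt) ⊆ closedBall 0 rT →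
      ∀ δ : Pt, ‖δ‖ = 1 →
      ∃ c : ℝ, 0 < c ∧ c ≤ C * (rS + rT + 2) / Real.sqrt ε ∧
        Feasible n (S : Set Pt) ((fun p => p + c • δ) '' (T : Set Pt)) := by
  refine ⟨3, by norm_num, ?_⟩
  intro ε hε hε1 n hn S T rS rT hrS hrT hSc hTc hS hT hSb hTb δ hδ
  have hs : 0 < Real.sqrt ε := Real.sqrt_pos.2 hε
  obtain ⟨s, hsi, hsr, hsm⟩ := exists_enum n S hSc (fun p => inner ℝ p δ)
  obtain ⟨t, hti, htr, htm⟩ := exists_enum n T hTc (fun p => inner ℝ p δ)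
  set c := 3 * (rS + rT + 2) / Real.sqrt ε with hc
  have hsS : ∀ i, s i ∈ S := fun i => by
    have : s i ∈ (S : Set Pt) := hsr ▸ Set.mem_range_self i
    exact this
  have htT : ∀ i, t i ∈ T := fun i => by
    have : t i ∈ (T : Set Pt) := htr ▸ Set.mem_range_self i
    exact this
  have hen : ∀ i, ‖t i - s i‖ ≤ rS + rT := fun i => by
    have h1 := hSb (hsS i)
    have h2 := hTb (htT i)
    rw [mem_closedBall_zero_iff] at h1 h2
    have := norm_sub_le (t i) (s i)
    linarith
  refine ⟨c, by positivity, le_refl _, s, fun i => t i + c • δ, hsi, ?_, hsr, ?_, ?_⟩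
  · intro a b h
    exact hti (add_right_cancel h)
  · rw [← htr, ← Set.range_comp]
    rfl
  · intro i x hx
    simp only [add_zero] at hx ⊢
    constructor
    · intro j hij
      refine avoid ε (rS + rT) c hε hε1 (by positivity) hc.ge δ hδ (s i) (s j) (t i - s i) (hen i)
        (hS _ (hsS i) _ (hsS j) (fun h => hij.ne (hsi h))) ?_ x ?_
      · rw [inner_sub_left]
        have := hsm i j hij.le
        linarith
      · convert hx using 2
        abel
    · intro j hij
      refine avoid ε (rS + rT) c hε hε1 (by positivity) hc.ge (-δ) (by rwa [norm_neg])
        (t i + c • δ) (t j + c • δ) (s i - t i) (by rw [norm_sub_rev]; exact hen i) ?_ ?_ x ?_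
      · rw [dist_add_right]
        exact hT _ (htT i) _ (htT j) (fun h => hij.ne (hti h).symm)
      · rw [add_sub_add_right_eq_sub, inner_neg_right, inner_sub_left]
        have := htm j i hij.le
        linarith
      · rw [segment_symm]
        convert hx using 2
        rw [smul_neg]
        abel
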